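/- Let T be a tight tour for the HCPP instance I_φ=(G,ω,𝒫,≺) produced by the construction from a 3-CNF formula φ, and let M = E(T) \ E be the multiset of edges that T traverses additionally to E (with the multiplicity of additional traversals). Then: (i) M ⊆ E_0 and M is a perfect matching on the vertex set V_FT ∪ V_C (in particular M contains each edge at most once); (ii) each edge in M has at least one endpoint in V_FT; and (iii) the multigraph ⟨G⟩((E \ E_0) ∪ M) is connected. -/

import Mathlib

namespace HCPPFormal

variable {V : Type} [DecidableEq V]

/-- The degree of a vertex in a multigraph given as a multiset of edges
(loops count twice, multiplicities are counted). -/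
def mDeg (M : Multiset (Sym2 V)) (v : V) : ℕ :=
  (M.map fun e => if e = Sym2.diag v then 2 else if v ∈ e then 1 else 0).sum

/-- The vertex set of the multigraph induced by a multiset of edges. -/
def mVerts (M : Multiset (Sym2 V)) : Set V := {v | ∃ e ∈ M, v ∈ e}

/-- Adjacency in the multigraph induced by a multiset of edges. -/
def mAdj (M : Multiset (Sym2 V)) (a b : V) : Prop := s(a, b) ∈ M

/-- The multigraph induced by a multiset of edges is connected. -/
def mConnected (M : Multiset (Sym2 V)) : Prop :=
  ∀ u ∈ mVerts M, ∀ v ∈ mVerts M, Relation.ReflTransGen (mAdj M) u v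

/-- The list of edges traversed by a walk, given as its list of vertices. -/
def walkEdgeList (w : List V) : List (Sym2 V) :=
  (w.zip w.tail).map fun p => s(p.1, p.2)

/-- The multiset of edges traversed by a walk (with multiplicities). -/
def walkEdges (w : List V) : Multiset (Sym2 V) :=
  (walkEdgeList w : Multiset (Sym2 V))

/-- The weight of a multiset of edges. -/
def mWeight (ω : Sym2 V → ℕ) (M : Multiset (Sym2 V)) : ℕ := (M.map ω).sum

/-- The weight of a walk. -/
def wWeight (ω : Sym2 V → ℕ) (w : List V) : ℕ := mWeight ω (walkEdges w)

/-- A multiset `M` of edges is a perfect matching on the vertex set `U`: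
it is a set of pairwise vertex-disjoint non-loop edges
whose endpoints are exactly the vertices of `U`. -/
def IsPerfectMatchingOn (M : Multiset (Sym2 V)) (U : Set V) : Prop :=
  M.Nodup ∧ (∀ e ∈ M, ¬ e.IsDiag) ∧
  (∀ e ∈ M, ∀ e' ∈ M, e ≠ e' → ∀ v : V, v ∈ e → v ∉ e') ∧
  mVerts M = U



/-- Vertices of the graph constructed from a 3-CNF formula:
`t i l`, `z i l`, `f i l` are the vertices `t_i^ℓ`, `z_i^ℓ`, `f_i^ℓ`;
`cs` is the vertex `c*`; `c1 j`, `c2 j` are `c_j¹`, `c_j²`;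
`a i j`, `b i j` are the auxiliary vertices `a_{ij}`, `b_{ij}`. -/
inductive V3 : Type where
  | t (i l : ℕ) : V3
  | z (i l : ℕ) : V3
  | f (i l : ℕ) : V3
  | cs : V3
  | c1 (j : ℕ) : V3
  | c2 (j : ℕ) : V3
  | a (i j : ℕ) : V3
  | b (i j : ℕ) : V3
deriving DecidableEq

/-- A 3-CNF formula with variables `0, …, n-1` and clauses `0, …, m-1`;
the pair `(i, true)` represents the literal `x_i` and `(i, false)` represents `¬x_i`.
Each clause has at most three literals, and no clause contains
both a variable and its negation. -/
structure CNF3 : Type where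
  n : ℕ
  m : ℕ
  clause : ℕ → Finset (ℕ × Bool)
  size_le : ∀ j < m, (clause j).card ≤ 3
  var_lt : ∀ j < m, ∀ p ∈ clause j, p.1 < n
  no_taut : ∀ j < m, ∀ i : ℕ, ¬ ((i, true) ∈ clause j ∧ (i, false) ∈ clause j)

/-- The clauses containing the variable `x_i` (positively or negatively). -/
def occ (φ : CNF3) (i : ℕ) : Finset ℕ :=
  (Finset.range φ.m).filter fun j => (i, true) ∈ φ.clause j ∨ (i, false) ∈ φ.clause j

/-- `μ φ i` is the number of clauses containing `x_i` or `¬x_i`. -/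
def μ (φ : CNF3) (i : ℕ) : ℕ := (occ φ i).card

/-- `posOf φ i j` is the (1-based) position `ℓ` such that clause `j` is
the `ℓ`-th clause containing `x_i` or `¬x_i`. -/
def posOf (φ : CNF3) (i j : ℕ) : ℕ := ((occ φ i).filter fun j' => j' ≤ j).card

/-- The edges of the cycle `X_i`. -/
def Xedges (φ : CNF3) (i : ℕ) : Finset (Sym2 V3) :=
  ((Finset.Ico 1 (6 * μ φ i)).image fun l => s(V3.t i l, V3.t i (l + 1))) ∪
  ((Finset.Ico 1 (6 * μ φ i)).image fun l => s(V3.f i l, V3.f i (l + 1))) ∪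
  {s(V3.t i (6 * μ φ i), V3.f i (6 * μ φ i)), s(V3.f i 1, V3.t i 1)}

/-- The edges of the cycle `Y_{i i'}` where `i' = (i mod n) + 1` (0-based: `(i+1) % n`). -/
def Yedges (φ : CNF3) (i : ℕ) : Finset (Sym2 V3) :=
  {s(V3.t i (6 * μ φ i), V3.f ((i + 1) % φ.n) 1),
   s(V3.f ((i + 1) % φ.n) 1, V3.f i (6 * μ φ i)),
   s(V3.f i (6 * μ φ i), V3.t ((i + 1) % φ.n) 1),
   s(V3.t ((i + 1) % φ.n) 1, V3.t i (6 * μ φ i))}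

/-- The edges of the cycle `Z_{ij}` (for a positive occurrence of `x_i` in clause `C_j`). -/
def Zedges (φ : CNF3) (i j : ℕ) : Finset (Sym2 V3) :=
  {s(V3.t i (6 * posOf φ i j - 3), V3.c1 j),
   s(V3.c1 j, V3.a i j),
   s(V3.a i j, V3.c2 j),
   s(V3.c2 j, V3.t i (6 * posOf φ i j - 2)),
   s(V3.t i (6 * posOf φ i j - 2), V3.b i j),
   s(V3.b i j, V3.t i (6 * posOf φ i j - 3))}

/-- The edges of the cycle `Z̄_{ij}` (for a negative occurrence of `¬x_i` in clause `C_j`). -/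
def Zbedges (φ : CNF3) (i j : ℕ) : Finset (Sym2 V3) :=
  {s(V3.f i (6 * posOf φ i j - 3), V3.c1 j),
   s(V3.c1 j, V3.a i j),
   s(V3.a i j, V3.c2 j),
   s(V3.c2 j, V3.f i (6 * posOf φ i j - 2)),
   s(V3.f i (6 * posOf φ i j - 2), V3.b i j),
   s(V3.b i j, V3.f i (6 * posOf φ i j - 3))}

/-- The edge class `E_0`: all edges of all cycles `X_i`, `Y_{ii'}`, `Z_{ij}`, `Z̄_{ij}`. -/
def E0 (φ : CNF3) : Finset (Sym2 V3) :=
  ((Finset.range φ.n).biUnion fun i => Xedges φ i) ∪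
  ((Finset.range φ.n).biUnion fun i => Yedges φ i) ∪
  ((Finset.range φ.m).biUnion fun j =>
    (φ.clause j).biUnion fun p => if p.2 then Zedges φ p.1 j else Zbedges φ p.1 j)

/-- The edge class `E_i^ℓ`: the edges of the path `P_i^ℓ = (t_i^ℓ, z_i^ℓ, f_i^ℓ)`. -/
def Epl (φ : CNF3) (i l : ℕ) : Finset (Sym2 V3) :=
  {s(V3.t i l, V3.z i l), s(V3.z i l, V3.f i l)}

/-- The edge class `E*`: all edges incident to `c*`,
i.e. the edges of the paths `(c_j¹, c*, c_j²)`. -/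
def Estar (φ : CNF3) : Finset (Sym2 V3) :=
  (Finset.range φ.m).biUnion fun j => {s(V3.c1 j, V3.cs), s(V3.cs, V3.c2 j)}

/-- All edges of the constructed graph `G`. -/
def Eall (φ : CNF3) : Finset (Sym2 V3) :=
  E0 φ ∪ Estar φ ∪
  ((Finset.range φ.n).biUnion fun i => (Finset.Icc 1 (6 * μ φ i)).biUnion fun l => Epl φ i l)

/-- The vertex set `V_FT` of all vertices `t_i^ℓ` and `f_i^ℓ`. -/
def VFT (φ : CNF3) : Set V3 :=
  {v | ∃ i < φ.n, ∃ l : ℕ, 1 ≤ l ∧ l ≤ 6 * μ φ i ∧ (v = V3.t i l ∨ v = V3.f i l)}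

/-- The vertex set `V_C` of all vertices `c_j¹` and `c_j²`. -/
def VC (φ : CNF3) : Set V3 :=
  {v | ∃ j < φ.m, v = V3.c1 j ∨ v = V3.c2 j}


/-- Indices for the edge classes of the constructed instance:
`e0` for `E_0`, `pl i l` for `E_i^ℓ`, `star` for `E*`. -/
inductive CI : Type where
  | e0 : CI
  | pl (i l : ℕ) : CI
  | star : CI
deriving DecidableEq

/-- The edge class with a given index. -/
def classEdges (φ : CNF3) : CI → Finset (Sym2 V3)
  | .e0 => E0 φ
  | .pl i l => Epl φ i l
  | .star => Estar φ

/-- The class indices actually occurring in the constructed instance. -/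
def validCI (φ : CNF3) : CI → Prop
  | .e0 => True
  | .pl i l => i < φ.n ∧ 1 ≤ l ∧ l ≤ 6 * μ φ i
  | .star => True

/-- The (strict) precedence order on the classes: `E_0` precedes every `E_i^ℓ`,
the classes `E_i^ℓ` are ordered lexicographically, and `E*` is incomparable
to all other classes. -/
def prec : CI → CI → Prop
  | .e0, .pl _ _ => True
  | .pl i l, .pl i' l' => i < i' ∨ (i = i' ∧ l < l')
  | _, _ => False

/-- A list of traversed edges respects the precedence constraints: whenever the
edge traversed at step `q` belongs to a class `A`, every edge of every class
`B ≺ A` has already been traversed at some earlier step `p < q`. -/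
def PrecRespecting (φ : CNF3) (L : List (Sym2 V3)) : Prop :=
  ∀ (q : ℕ) (hq : q < L.length) (A : CI), validCI φ A → L.get ⟨q, hq⟩ ∈ classEdges φ A →
    ∀ B : CI, validCI φ B → prec B A → ∀ e ∈ classEdges φ B,
      ∃ (p : ℕ) (hp : p < L.length), p < q ∧ L.get ⟨p, hp⟩ = e

/-- A feasible solution for the constructed HCPP instance: a closed walk in `G`
traversing every edge at least once and respecting the precedence constraints. -/
def FeasibleTour (φ : CNF3) (T : List V3) : Prop :=
  T ≠ [] ∧ T.Chain' (fun a b => s(a, b) ∈ Eall φ) ∧ T.head? = T.getLast? ∧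
  (∀ e ∈ Eall φ, e ∈ walkEdges T) ∧ PrecRespecting φ (walkEdgeList T)

/-- The number `b` of imbalanced vertices of the constructed graph `G`. -/
noncomputable def imb (φ : CNF3) : ℕ := Nat.card {v : V3 // ¬ Even (mDeg (Eall φ).val v)}

/-- A tight tour: a feasible solution of weight at most `|E| + b/2`
(all edges have weight one, so the weight is the number of edge traversals). -/
def IsTightTour (φ : CNF3) (T : List V3) : Prop :=
  FeasibleTour φ T ∧
  ((Multiset.card (walkEdges T) : ℚ) ≤ (Eall φ).card + (imb φ : ℚ) / 2)

/-!
The class `E_0` is an edge-disjoint union of closed walks, so the imbalanced vertices of `G` are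
exactly the ends of the paths `(t_i^ℓ, z_i^ℓ, f_i^ℓ)` and `(c_j¹, c*, c_j²)`, that is,
`V_FT ∪ V_C`. All degrees of a closed walk are even, so the extra traversals `M` have odd degree at
every imbalanced vertex, and tightness leaves only enough of them to meet these vertices in pairs.
Hence `M` is a perfect matching on `V_FT ∪ V_C`. It avoids the vertices `z_i^ℓ` and `c*`, so
`M ⊆ E_0`, and `V_C` is independent in `E_0`, so every edge of `M` meets `V_FT`.

For connectivity, note that when the tour traverses an edge of some path `(t_i^ℓ, z_i^ℓ, f_i^ℓ)` for
the first time, it has already used every edge of `E_0`. From then on it moves only along edges of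
`(E \ E_0) ∪ M`, and it still visits every vertex of `V_FT`. All other vertices are joined to
`V_FT` by the paths and by `M`.
-/

section Multigraph

variable {α : Type}

/-! ### Connectivity -/

instance (R : Multiset (Sym2 α)) : Std.Symm (mAdj R) where
  symm a b h := by rwa [mAdj, Sym2.eq_swap]

lemma reflTransGen_mAdj_symm {R : Multiset (Sym2 α)} {a b : α}
    (h : Relation.ReflTransGen (mAdj R) a b) : Relation.ReflTransGen (mAdj R) b a :=
  symm h

lemma reflTransGen_mAdj_mono {R R' : Multiset (Sym2 α)} (h : R ≤ R') {a b : α}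
    (hab : Relation.ReflTransGen (mAdj R) a b) : Relation.ReflTransGen (mAdj R') a b :=
  Relation.ReflTransGen.mono (fun _ _ ↦ Multiset.mem_of_le h) _ _ hab

lemma reflTransGen_mAdj_of_mem {R : Multiset (Sym2 α)} {e : Sym2 α} (he : e ∈ R) {a b : α}
    (ha : a ∈ e) (hb : b ∈ e) : Relation.ReflTransGen (mAdj R) a b := by
  obtain rfl | hab := eq_or_ne a b
  · exact .refl
  · exact .single ((Sym2.mem_and_mem_iff hab).1 ⟨ha, hb⟩ ▸ he : s(a, b) ∈ R)

lemma mConnected_of_forall_exists_reachable {R : Multiset (Sym2 α)} {U : Set α}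
    (hU : ∀ x ∈ U, ∀ y ∈ U, Relation.ReflTransGen (mAdj R) x y)
    (h : ∀ u ∈ mVerts R, ∃ x ∈ U, Relation.ReflTransGen (mAdj R) u x) : mConnected R := by
  intro u hu v hv
  obtain ⟨x, hx, hux⟩ := h u hu
  obtain ⟨y, hy, hvy⟩ := h v hv
  exact (hux.trans (hU x hx y hy)).trans (reflTransGen_mAdj_symm hvy)

lemma finite_mVerts (M : Multiset (Sym2 α)) : (mVerts M).Finite := by
  classical
  exact (M.toFinset.biUnion Sym2.toFinset).finite_toSet.subset fun v hv ↦ by simpa [mVerts] using hv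

/-! ### Walks -/

lemma walkEdges_singleton (a : α) : walkEdges [a] = 0 := rfl

lemma walkEdges_cons_cons (a b : α) (w : List α) :
    walkEdges (a :: b :: w) = s(a, b) ::ₘ walkEdges (b :: w) := rfl

lemma walkEdgeList_drop (w : List α) (q : ℕ) :
    walkEdgeList (w.drop q) = (walkEdgeList w).drop q := by
  simp only [walkEdgeList, List.zip, List.tail_drop, ← List.map_drop, List.drop_zipWith,
    List.drop_tail]

lemma mem_of_mem_walkEdges {S : Set (Sym2 α)} {w : List α}
    (h : w.IsChain fun a b ↦ s(a, b) ∈ S) {e : Sym2 α} (he : e ∈ walkEdges w) : e ∈ S := by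
  induction h with
  | nil => simp [walkEdges, walkEdgeList] at he
  | singleton => simp [walkEdges_singleton] at he
  | cons_cons hab _ ih =>
    rw [walkEdges_cons_cons, Multiset.mem_cons] at he
    obtain rfl | he := he
    exacts [hab, ih he]

lemma reflTransGen_walkEdges_head {a v : α} {w : List α} (hv : v ∈ a :: w) :
    Relation.ReflTransGen (mAdj (walkEdges (a :: w))) a v := by
  induction w generalizing a with
  | nil => rw [List.mem_singleton.1 hv]
  | cons b w ih =>
    obtain rfl | hv := List.mem_cons.1 hv
    · exact .refl
    · rw [walkEdges_cons_cons]
      exact .head (Multiset.mem_cons_self _ _)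
        (reflTransGen_mAdj_mono (Multiset.le_cons_self _ _) (ih hv))

lemma mConnected_walkEdges (w : List α) : mConnected (walkEdges w) := by
  have mem_of_mem_mVerts {v : α} (hv : v ∈ mVerts (walkEdges w)) : v ∈ w := by
    obtain ⟨e, he, hve⟩ := hv
    obtain ⟨⟨a, b⟩, hab, rfl⟩ := List.mem_map.1 (Multiset.mem_coe.1 he)
    obtain ⟨ha, hb⟩ := List.of_mem_zip hab
    obtain rfl | rfl := Sym2.mem_iff.1 hve
    exacts [ha, List.mem_of_mem_tail hb]
  intro u hu v hv
  have hu' := mem_of_mem_mVerts hu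
  have hv' := mem_of_mem_mVerts hv
  cases w with
  | nil => simp at hu'
  | cons a w =>
    exact (reflTransGen_mAdj_symm (reflTransGen_walkEdges_head hu')).trans
      (reflTransGen_walkEdges_head hv')

/-! ### Degrees -/

section Degree

variable [DecidableEq α]

lemma mDeg_zero (v : α) : mDeg 0 v = 0 := rfl

lemma mDeg_add (M N : Multiset (Sym2 α)) (v : α) : mDeg (M + N) v = mDeg M v + mDeg N v := by
  simp [mDeg]

lemma mDeg_cons (e : Sym2 α) (M : Multiset (Sym2 α)) (v : α) :
    mDeg (e ::ₘ M) v = mDeg {e} v + mDeg M v :=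
  mDeg_add {e} M v

lemma mDeg_mono {M N : Multiset (Sym2 α)} (h : M ≤ N) (v : α) : mDeg M v ≤ mDeg N v := by
  obtain ⟨K, rfl⟩ := Multiset.le_iff_exists_add.1 h
  simp [mDeg_add]

lemma mDeg_singleton_mk (a b v : α) :
    mDeg {s(a, b)} v = (if v = a then 1 else 0) + (if v = b then 1 else 0) := by
  simp only [mDeg, Sym2.diag, Multiset.map_singleton, Multiset.sum_singleton]
  grind

lemma mDeg_singleton_pos_iff {e : Sym2 α} {v : α} : 0 < mDeg {e} v ↔ v ∈ e := by
  induction e with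
  | _ a b => rw [mDeg_singleton_mk, Sym2.mem_iff]; grind

lemma mDeg_pos_iff {M : Multiset (Sym2 α)} {v : α} : 0 < mDeg M v ↔ v ∈ mVerts M := by
  induction M using Multiset.induction with
  | empty => simp [mDeg_zero, mVerts]
  | cons e M ih =>
    rw [mDeg_cons, add_pos_iff, ih, mDeg_singleton_pos_iff]
    simp [mVerts]

lemma mDeg_finset_val (S : Finset (Sym2 α)) (v : α) : mDeg S.val v = ∑ e ∈ S, mDeg {e} v := by
  simp [mDeg]

lemma mDeg_union {S S' : Finset (Sym2 α)} (h : Disjoint S S') (v : α) :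
    mDeg (S ∪ S').val v = mDeg S.val v + mDeg S'.val v := by
  simp only [mDeg_finset_val, Finset.sum_union h]

lemma mDeg_biUnion {ι : Type*} {s : Finset ι} {F : ι → Finset (Sym2 α)}
    (h : (s : Set ι).PairwiseDisjoint F) (v : α) :
    mDeg (s.biUnion F).val v = ∑ i ∈ s, mDeg (F i).val v := by
  simp only [mDeg_finset_val, Finset.sum_biUnion h]

lemma even_mDeg_biUnion {ι : Type*} {s : Finset ι} {F : ι → Finset (Sym2 α)}
    (hdisj : ∀ i ∈ s, ∀ i' ∈ s, ∀ e ∈ F i, e ∈ F i' → i = i') {v : α}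
    (h : ∀ i ∈ s, Even (mDeg (F i).val v)) : Even (mDeg (s.biUnion F).val v) := by
  rw [mDeg_biUnion fun i hi i' hi' hne ↦
    Finset.disjoint_left.2 fun e he he' ↦ hne (hdisj i hi i' hi' e he he')]
  exact Finset.even_sum _ h

lemma mDeg_two_path {a b c : α} (h : a ≠ c) (v : α) :
    mDeg ({s(a, b), s(b, c)} : Finset (Sym2 α)).val v =
      (if v = a then 1 else 0) + 2 * (if v = b then 1 else 0) + (if v = c then 1 else 0) := by
  have hne : s(a, b) ≠ s(b, c) := by grind
  rw [mDeg_finset_val, Finset.sum_pair hne, mDeg_singleton_mk, mDeg_singleton_mk]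
  ring

lemma sum_mDeg_le (U : Finset α) (M : Multiset (Sym2 α)) :
    ∑ v ∈ U, mDeg M v ≤ 2 * Multiset.card M := by
  induction M using Multiset.induction with
  | empty => simp [mDeg_zero]
  | cons e M ih =>
    have he : ∑ v ∈ U, mDeg {e} v ≤ 2 := by
      induction e with
      | _ a b =>
        simp only [mDeg_singleton_mk, Finset.sum_add_distrib, Finset.sum_ite_eq']
        split_ifs <;> simp
    simp only [mDeg_cons, Finset.sum_add_distrib, Multiset.card_cons]
    omega

lemma even_mDeg_walkEdges_iff (a : α) (w : List α) (v : α) :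
    Even (mDeg (walkEdges (a :: w)) v) ↔
      (v = a ↔ v = (a :: w).getLast (List.cons_ne_nil a w)) := by
  induction w generalizing a with
  | nil => simp [walkEdges_singleton, mDeg_zero]
  | cons b w ih =>
    rw [walkEdges_cons_cons, mDeg_cons, Nat.even_add, ih, mDeg_singleton_mk,
      List.getLast_cons (List.cons_ne_nil b w)]
    split_ifs <;> simp_all

lemma even_mDeg_walkEdges {w : List α} (hclosed : w.head? = w.getLast?) (v : α) :
    Even (mDeg (walkEdges w) v) := by
  cases w with
  | nil => exact Even.zero
  | cons a w =>
    rw [List.getLast?_eq_getLast_of_ne_nil (List.cons_ne_nil a w), List.head?_cons,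
      Option.some_inj] at hclosed
    rw [even_mDeg_walkEdges_iff, ← hclosed]

lemma even_mDeg_toFinset_walkEdgeList {w : List α} (hnodup : (walkEdgeList w).Nodup)
    (hclosed : w.head? = w.getLast?) (v : α) :
    Even (mDeg (walkEdgeList w).toFinset.val v) := by
  rw [List.toFinset_val, hnodup.dedup]
  exact even_mDeg_walkEdges hclosed v

lemma even_mDeg_image_path_iff {g : ℕ → α} (hg : Function.Injective g) {m n : ℕ} (hmn : m ≤ n)
    (v : α) : Even (mDeg ((Finset.Ico m n).image fun l ↦ s(g l, g (l + 1))).val v) ↔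
      (v = g m ↔ v = g n) := by
  have hinj : Function.Injective fun l ↦ s(g l, g (l + 1)) := fun l l' h ↦ by
    have := Sym2.eq_iff.1 h
    simp only [hg.eq_iff] at this
    omega
  rw [mDeg_finset_val, Finset.sum_image hinj.injOn]
  obtain ⟨k, rfl⟩ := Nat.exists_eq_add_of_le hmn
  clear hmn
  induction k with
  | zero => simp
  | succ k ih =>
    have hne : g (m + k) ≠ g (m + (k + 1)) := hg.ne (by omega)
    rw [← add_assoc, Finset.sum_Ico_succ_top (by omega), Nat.even_add, mDeg_singleton_mk]
    simp only [ih]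
    split_ifs <;> simp_all [add_assoc]

/-! ### Perfect matchings -/

lemma two_le_mDeg_of_pair_le {M : Multiset (Sym2 α)} {e e' : Sym2 α} (h : {e, e'} ≤ M) {v : α}
    (he : v ∈ e) (he' : v ∈ e') : 2 ≤ mDeg M v :=
  calc 2 ≤ mDeg {e} v + mDeg {e'} v :=
        Nat.add_le_add (mDeg_singleton_pos_iff.2 he) (mDeg_singleton_pos_iff.2 he')
    _ = mDeg {e, e'} v := (mDeg_cons e {e'} v).symm
    _ ≤ mDeg M v := mDeg_mono h v

lemma isPerfectMatchingOn_mVerts {M : Multiset (Sym2 α)} (h : ∀ v, mDeg M v ≤ 1) :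
    IsPerfectMatchingOn M (mVerts M) := by
  have no_pair {e e' : Sym2 α} {v : α} (he : v ∈ e) (he' : v ∈ e') : ¬ {e, e'} ≤ M :=
    fun hle ↦ absurd (two_le_mDeg_of_pair_le hle he he') (by have := h v; omega)
  refine ⟨?_, ?_, ?_, rfl⟩
  · exact Multiset.nodup_iff_le.2 fun e ↦ no_pair e.out_fst_mem e.out_fst_mem
  · rintro ⟨a, b⟩ he (rfl : a = b)
    have hloop := mDeg_mono (Multiset.singleton_le.2 he) a
    rw [mDeg_singleton_mk, if_pos rfl] at hloop
    have := h a
    omega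
  · intro e he e' he' hne v hv hv'
    refine no_pair hv hv' ((Multiset.le_iff_subset (by simpa using hne)).2 ?_)
    simp [he, he']

lemma mDeg_eq_ite_of_card_le {M : Multiset (Sym2 α)} {B : Finset α} (hB : ↑B ⊆ mVerts M)
    (hcard : 2 * Multiset.card M ≤ B.card) (v : α) : mDeg M v = if v ∈ B then 1 else 0 := by
  have hle : ∀ u ∈ insert v B, (if u ∈ B then 1 else 0) ≤ mDeg M u := by
    intro u _
    split_ifs with hu
    · exact mDeg_pos_iff.2 (hB hu)
    · exact Nat.zero_le _
  have hsum : ∑ u ∈ insert v B, mDeg M u ≤ ∑ u ∈ insert v B, if u ∈ B then 1 else 0 :=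
    calc ∑ u ∈ insert v B, mDeg M u ≤ 2 * Multiset.card M := sum_mDeg_le _ M
      _ ≤ B.card := hcard
      _ = ∑ u ∈ insert v B, if u ∈ B then 1 else 0 := by
        rw [Finset.sum_ite_mem, Finset.inter_eq_right.2 (Finset.subset_insert v B),
          Finset.card_eq_sum_ones]
  exact ((Finset.sum_eq_sum_iff_of_le hle).1 ((Finset.sum_le_sum hle).antisymm hsum) v
    (Finset.mem_insert_self v B)).symm

end Degree

lemma isPerfectMatchingOn_of_card_le {M : Multiset (Sym2 α)} {B : Finset α} (hB : ↑B ⊆ mVerts M)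
    (hcard : 2 * Multiset.card M ≤ B.card) : IsPerfectMatchingOn M B := by
  classical
  have hdeg := mDeg_eq_ite_of_card_le hB hcard
  have hverts : mVerts M = B := by
    ext v
    rw [← mDeg_pos_iff, hdeg v, Finset.mem_coe]
    split_ifs with hv <;> simp [hv]
  rw [← hverts]
  exact isPerfectMatchingOn_mVerts fun v ↦ by rw [hdeg v]; split_ifs <;> simp

/-! ### Tight covering walks -/

section Tight

variable [DecidableEq α]

/-- The imbalanced vertices of the multigraph induced by a multiset of edges. Vertices outside the
multigraph have degree zero and are therefore not imbalanced. -/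
def imbalancedVerts (M : Multiset (Sym2 α)) : Set α := {v | ¬ Even (mDeg M v)}

lemma imbalancedVerts_subset_mVerts (M : Multiset (Sym2 α)) : imbalancedVerts M ⊆ mVerts M :=
  fun _ hv ↦ mDeg_pos_iff.1 (Nat.pos_of_ne_zero fun h ↦ hv (h ▸ Even.zero))

lemma eq_val_add_sub {β : Type*} [DecidableEq β] {E : Finset β} {M : Multiset β}
    (h : ∀ e ∈ E, e ∈ M) : M = E.val + (M - E.val) :=
  (add_tsub_cancel_of_le ((Multiset.le_iff_subset E.nodup).2 h)).symm

theorem isPerfectMatchingOn_walkEdges_sub {E : Finset (Sym2 α)} {w : List α}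
    (hclosed : w.head? = w.getLast?) (hcover : ∀ e ∈ E, e ∈ walkEdges w)
    (htight : 2 * Multiset.card (walkEdges w) ≤ 2 * E.card + (imbalancedVerts E.val).ncard) :
    IsPerfectMatchingOn (walkEdges w - E.val) (imbalancedVerts E.val) := by
  have hsplit := eq_val_add_sub hcover
  generalize walkEdges w - E.val = M at hsplit ⊢
  have hfin := (finite_mVerts E.val).subset (imbalancedVerts_subset_mVerts E.val)
  have hB : imbalancedVerts E.val ⊆ mVerts M := by
    intro v hv
    have heven := even_mDeg_walkEdges hclosed v
    rw [hsplit, mDeg_add, Nat.even_add] at heven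
    exact imbalancedVerts_subset_mVerts M fun hM ↦ hv (heven.2 hM)
  rw [hsplit, Multiset.card_add, Finset.card_val, Set.ncard_eq_toFinset_card _ hfin] at htight
  rw [← hfin.coe_toFinset] at hB ⊢
  exact isPerfectMatchingOn_of_card_le hB (by omega)

end Tight

end Multigraph

/-! ### The cycles of the construction -/

section Construction

variable {φ : CNF3}

/-- The vertex `t_i^ℓ` for the literal `x_i`, and `f_i^ℓ` for the literal `¬x_i`. -/
def literalVertex (p : ℕ × Bool) (l : ℕ) : V3 := if p.2 then .t p.1 l else .f p.1 l

/-- The edges of the cycle `Z_{ij}` (for `p = x_i`) or `Z̄_{ij}` (for `p = ¬x_i`). -/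
def occurrenceCycle (φ : CNF3) (j : ℕ) (p : ℕ × Bool) : Finset (Sym2 V3) :=
  if p.2 then Zedges φ p.1 j else Zbedges φ p.1 j

/-- The edges of all paths `P_i^ℓ`, that is, the union of the classes `E_i^ℓ`. -/
def pathEdges (φ : CNF3) : Finset (Sym2 V3) :=
  (Finset.range φ.n).biUnion fun i ↦ (Finset.Icc 1 (6 * μ φ i)).biUnion fun l ↦ Epl φ i l

lemma E0_eq (φ : CNF3) :
    E0 φ = (Finset.range φ.n).biUnion (Xedges φ) ∪ (Finset.range φ.n).biUnion (Yedges φ) ∪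
      (Finset.range φ.m).biUnion fun j ↦ (φ.clause j).biUnion (occurrenceCycle φ j) :=
  rfl

lemma Eall_eq (φ : CNF3) : Eall φ = E0 φ ∪ Estar φ ∪ pathEdges φ := rfl

lemma literalVertex_inj {p p' : ℕ × Bool} {l l' : ℕ} :
    literalVertex p l = literalVertex p' l' ↔ p = p' ∧ l = l' := by
  grind [literalVertex]

lemma mem_Xedges {i : ℕ} {e : Sym2 V3} :
    e ∈ Xedges φ i ↔ (∃ l, 1 ≤ l ∧ l < 6 * μ φ i ∧
        (e = s(.t i l, .t i (l + 1)) ∨ e = s(.f i l, .f i (l + 1)))) ∨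
      e = s(.t i (6 * μ φ i), .f i (6 * μ φ i)) ∨ e = s(.f i 1, .t i 1) := by
  simp only [Xedges, Finset.mem_union, Finset.mem_image, Finset.mem_Ico, Finset.mem_insert,
    Finset.mem_singleton]
  grind

lemma Yedges_eq_toFinset (φ : CNF3) (i : ℕ) :
    Yedges φ i = (walkEdgeList [.t i (6 * μ φ i), .f ((i + 1) % φ.n) 1, .f i (6 * μ φ i),
      .t ((i + 1) % φ.n) 1, .t i (6 * μ φ i)]).toFinset := by
  simp [Yedges, walkEdgeList]

lemma occurrenceCycle_eq_toFinset (φ : CNF3) (j : ℕ) (p : ℕ × Bool) :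
    occurrenceCycle φ j p = (walkEdgeList [literalVertex p (6 * posOf φ p.1 j - 3), .c1 j,
      .a p.1 j, .c2 j, literalVertex p (6 * posOf φ p.1 j - 2), .b p.1 j,
      literalVertex p (6 * posOf φ p.1 j - 3)]).toFinset := by
  obtain ⟨i, _ | _⟩ := p <;> simp [occurrenceCycle, Zedges, Zbedges, literalVertex, walkEdgeList]

lemma exists_eq_of_mem_occurrenceCycle {j : ℕ} {p : ℕ × Bool} {e : Sym2 V3}
    (he : e ∈ occurrenceCycle φ j p) :
    (∃ l, e = s(literalVertex p l, .c1 j) ∨ e = s(literalVertex p l, .c2 j) ∨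
        e = s(literalVertex p l, .b p.1 j)) ∨
      e = s(.a p.1 j, .c1 j) ∨ e = s(.a p.1 j, .c2 j) := by
  simp only [occurrenceCycle_eq_toFinset, walkEdgeList, List.zip, List.tail, List.zipWith, List.map,
    List.mem_toFinset, List.mem_cons] at he
  grind

lemma exists_literalVertex_of_mem_Xedges {i : ℕ} {e : Sym2 V3} (he : e ∈ Xedges φ i) {v : V3}
    (hv : v ∈ e) : ∃ b l, v = literalVertex (i, b) l := by
  simp only [literalVertex, Bool.exists_bool]
  rw [mem_Xedges] at he
  grind

lemma exists_literalVertex_of_mem_Yedges {i : ℕ} {e : Sym2 V3} (he : e ∈ Yedges φ i) {v : V3}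
    (hv : v ∈ e) : ∃ p l, v = literalVertex p l := by
  simp only [literalVertex, Prod.exists, Bool.exists_bool]
  simp only [Yedges, Finset.mem_insert, Finset.mem_singleton] at he
  grind

lemma exists_ne_literalVertex_of_mem_occurrenceCycle {j : ℕ} {p : ℕ × Bool} {e : Sym2 V3}
    (he : e ∈ occurrenceCycle φ j p) : ∃ v ∈ e, ∀ p l, v ≠ literalVertex p l := by
  obtain ⟨l, rfl | rfl | rfl⟩ | rfl | rfl := exists_eq_of_mem_occurrenceCycle he <;>
    exact ⟨_, Sym2.mem_mk_right _ _, by grind [literalVertex]⟩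

lemma mem_E0 {e : Sym2 V3} : e ∈ E0 φ ↔ (∃ i < φ.n, e ∈ Xedges φ i) ∨
    (∃ i < φ.n, e ∈ Yedges φ i) ∨ ∃ j < φ.m, ∃ p ∈ φ.clause j, e ∈ occurrenceCycle φ j p := by
  simp only [E0_eq, Finset.mem_union, Finset.mem_biUnion, Finset.mem_range, or_assoc]

/-! ### Disjointness of the cycles -/

lemma eq_of_mem_Xedges {i i' : ℕ} {e : Sym2 V3} (he : e ∈ Xedges φ i) (he' : e ∈ Xedges φ i') :
    i = i' := by
  obtain ⟨b, l, hv⟩ := exists_literalVertex_of_mem_Xedges he e.out_fst_mem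
  obtain ⟨b', l', hv'⟩ := exists_literalVertex_of_mem_Xedges he' e.out_fst_mem
  exact congrArg Prod.fst (literalVertex_inj.1 (hv.symm.trans hv')).1

lemma eq_of_mem_Yedges {i i' : ℕ} {e : Sym2 V3}
    (he : e ∈ Yedges φ i) (he' : e ∈ Yedges φ i') : i = i' := by
  simp only [Yedges, Finset.mem_insert, Finset.mem_singleton] at he he'
  rcases he with rfl | rfl | rfl | rfl <;> grind [Sym2.eq_iff]

lemma disjoint_Xedges_Yedges (i i' : ℕ) : Disjoint (Xedges φ i) (Yedges φ i') := by
  refine Finset.disjoint_left.2 fun e he he' ↦ ?_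
  rw [mem_Xedges] at he
  simp only [Yedges, Finset.mem_insert, Finset.mem_singleton] at he'
  rcases he' with rfl | rfl | rfl | rfl <;> grind [Sym2.eq_iff]

lemma disjoint_Xedges_occurrenceCycle (i j : ℕ) (p : ℕ × Bool) :
    Disjoint (Xedges φ i) (occurrenceCycle φ j p) := by
  refine Finset.disjoint_left.2 fun e he he' ↦ ?_
  obtain ⟨v, hv, hne⟩ := exists_ne_literalVertex_of_mem_occurrenceCycle he'
  obtain ⟨b, l, rfl⟩ := exists_literalVertex_of_mem_Xedges he hv
  exact hne _ _ rfl

lemma disjoint_Yedges_occurrenceCycle (i j : ℕ) (p : ℕ × Bool) :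
    Disjoint (Yedges φ i) (occurrenceCycle φ j p) := by
  refine Finset.disjoint_left.2 fun e he he' ↦ ?_
  obtain ⟨v, hv, hne⟩ := exists_ne_literalVertex_of_mem_occurrenceCycle he'
  obtain ⟨q, l, rfl⟩ := exists_literalVertex_of_mem_Yedges he hv
  exact hne _ _ rfl

lemma eq_and_fst_eq_of_mem_occurrenceCycle {j j' : ℕ} {p p' : ℕ × Bool} {e : Sym2 V3}
    (he : e ∈ occurrenceCycle φ j p) (he' : e ∈ occurrenceCycle φ j' p') :
    j = j' ∧ p.1 = p'.1 := by
  have h' := exists_eq_of_mem_occurrenceCycle he'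
  rcases exists_eq_of_mem_occurrenceCycle he with ⟨l, rfl | rfl | rfl⟩ | rfl | rfl <;>
    grind [Sym2.eq_iff, literalVertex]

lemma literal_eq_of_mem_clause {j : ℕ} (hj : j < φ.m) {p p' : ℕ × Bool} (hp : p ∈ φ.clause j)
    (hp' : p' ∈ φ.clause j) (h : p.1 = p'.1) : p = p' := by
  obtain ⟨i, s⟩ := p
  obtain ⟨i', s'⟩ := p'
  obtain rfl : i = i' := h
  have := φ.no_taut j hj i
  cases s <;> cases s' <;> simp_all


/-! ### Balance of `E_0` -/

lemma even_mDeg_Xedges {i : ℕ} (hi : 1 ≤ μ φ i) (v : V3) : Even (mDeg (Xedges φ i).val v) := by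
  have ht : Function.Injective (V3.t i) := fun l l' h ↦ by injection h
  have hf : Function.Injective (V3.f i) := fun l l' h ↦ by injection h
  have htf : Disjoint ((Finset.Ico 1 (6 * μ φ i)).image fun l ↦ s(V3.t i l, V3.t i (l + 1)))
      ((Finset.Ico 1 (6 * μ φ i)).image fun l ↦ s(V3.f i l, V3.f i (l + 1))) := by
    simp only [Finset.disjoint_left, Finset.mem_image]
    grind
  rw [Xedges, mDeg_union (by simp), mDeg_union htf, Nat.even_add, Nat.even_add,
    even_mDeg_image_path_iff ht (by omega), even_mDeg_image_path_iff hf (by omega),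
    mDeg_finset_val, Finset.sum_pair (by simp), mDeg_singleton_mk, mDeg_singleton_mk]
  split_ifs <;> simp_all

lemma even_mDeg_Yedges (i : ℕ) (v : V3) : Even (mDeg (Yedges φ i).val v) := by
  rw [Yedges_eq_toFinset]
  refine even_mDeg_toFinset_walkEdgeList ?_ rfl v
  simp [walkEdgeList]

lemma one_le_posOf {j : ℕ} (hj : j < φ.m) {p : ℕ × Bool} (hp : p ∈ φ.clause j) :
    1 ≤ posOf φ p.1 j := by
  refine Finset.card_pos.2 ⟨j, ?_⟩
  obtain ⟨i, _ | _⟩ := p <;> simp [occ, hj, hp]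

lemma even_mDeg_occurrenceCycle {j : ℕ} {p : ℕ × Bool} (hp : 1 ≤ posOf φ p.1 j) (v : V3) :
    Even (mDeg (occurrenceCycle φ j p).val v) := by
  rw [occurrenceCycle_eq_toFinset]
  refine even_mDeg_toFinset_walkEdgeList ?_ rfl v
  simp only [walkEdgeList, List.zip, List.tail, List.zipWith, List.map, List.nodup_cons,
    List.nodup_nil, List.mem_cons, List.not_mem_nil, Sym2.eq_iff, literalVertex]
  grind

lemma even_mDeg_biUnion_occurrenceCycle (v : V3) : Even (mDeg ((Finset.range φ.m).biUnion
    fun j ↦ (φ.clause j).biUnion (occurrenceCycle φ j)).val v) := by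
  refine even_mDeg_biUnion (fun j _ j' _ e he he' ↦ ?_) fun j hj ↦ ?_
  · obtain ⟨p, -, hp⟩ := Finset.mem_biUnion.1 he
    obtain ⟨p', -, hp'⟩ := Finset.mem_biUnion.1 he'
    exact (eq_and_fst_eq_of_mem_occurrenceCycle hp hp').1
  · rw [Finset.mem_range] at hj
    exact even_mDeg_biUnion
      (fun p hp p' hp' e he he' ↦ literal_eq_of_mem_clause hj hp hp'
        (eq_and_fst_eq_of_mem_occurrenceCycle he he').2)
      fun p hp ↦ even_mDeg_occurrenceCycle (one_le_posOf hj hp) v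

lemma even_mDeg_E0 (hμ : ∀ i < φ.n, 1 ≤ μ φ i) (v : V3) : Even (mDeg (E0 φ).val v) := by
  have hX : Even (mDeg ((Finset.range φ.n).biUnion (Xedges φ)).val v) :=
    even_mDeg_biUnion (fun _ _ _ _ _ ↦ eq_of_mem_Xedges)
      fun i hi ↦ even_mDeg_Xedges (hμ i (Finset.mem_range.1 hi)) v
  have hY : Even (mDeg ((Finset.range φ.n).biUnion (Yedges φ)).val v) :=
    even_mDeg_biUnion (fun _ _ _ _ _ ↦ eq_of_mem_Yedges) fun i _ ↦ even_mDeg_Yedges i v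
  have hXY : Disjoint ((Finset.range φ.n).biUnion (Xedges φ))
      ((Finset.range φ.n).biUnion (Yedges φ)) :=
    (Finset.disjoint_biUnion_left ..).2 fun i _ ↦ (Finset.disjoint_biUnion_right ..).2 fun i' _ ↦
      disjoint_Xedges_Yedges i i'
  have hXYZ : Disjoint ((Finset.range φ.n).biUnion (Xedges φ) ∪
      (Finset.range φ.n).biUnion (Yedges φ)) ((Finset.range φ.m).biUnion
        fun j ↦ (φ.clause j).biUnion (occurrenceCycle φ j)) := by
    refine (Finset.disjoint_biUnion_right ..).2 fun j _ ↦
      (Finset.disjoint_biUnion_right ..).2 fun p _ ↦ Finset.disjoint_union_left.2 ⟨?_, ?_⟩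
    · exact (Finset.disjoint_biUnion_left ..).2 fun i _ ↦ disjoint_Xedges_occurrenceCycle i j p
    · exact (Finset.disjoint_biUnion_left ..).2 fun i _ ↦ disjoint_Yedges_occurrenceCycle i j p
  rw [E0_eq, mDeg_union hXYZ, mDeg_union hXY]
  exact (hX.add hY).add (even_mDeg_biUnion_occurrenceCycle v)

/-! ### The imbalanced vertices -/

/-- The interior vertices `z_i^ℓ` and `c*` of the paths `(t_i^ℓ, z_i^ℓ, f_i^ℓ)` and
`(c_j¹, c*, c_j²)`; they tell the edges of the paths from the edges in `E_0`. -/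
def middleVerts : Set V3 := {v | v = .cs ∨ ∃ i l, v = .z i l}

lemma mem_Estar {e : Sym2 V3} :
    e ∈ Estar φ ↔ ∃ j < φ.m, e = s(.c1 j, .cs) ∨ e = s(.cs, .c2 j) := by
  simp [Estar]

lemma mem_pathEdges {e : Sym2 V3} : e ∈ pathEdges φ ↔ ∃ i < φ.n, ∃ l, (1 ≤ l ∧ l ≤ 6 * μ φ i) ∧
    (e = s(.t i l, .z i l) ∨ e = s(.z i l, .f i l)) := by
  simp [pathEdges, Epl]

lemma notMem_middleVerts_of_mem_E0 {e : Sym2 V3} (he : e ∈ E0 φ) {v : V3} (hv : v ∈ e) :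
    v ∉ middleVerts := by
  obtain ⟨i, -, he⟩ | ⟨i, -, he⟩ | ⟨j, -, p, -, he⟩ := mem_E0.1 he
  · obtain ⟨b, l, rfl⟩ := exists_literalVertex_of_mem_Xedges he hv
    grind [middleVerts, literalVertex]
  · obtain ⟨p, l, rfl⟩ := exists_literalVertex_of_mem_Yedges he hv
    grind [middleVerts, literalVertex]
  · have := exists_eq_of_mem_occurrenceCycle he
    grind [middleVerts, literalVertex]

lemma exists_mem_middleVerts_of_mem_Estar {e : Sym2 V3} (he : e ∈ Estar φ) :
    ∃ v ∈ e, v ∈ middleVerts := by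
  obtain ⟨j, -, rfl | rfl⟩ := mem_Estar.1 he
  exacts [⟨.cs, Sym2.mem_mk_right _ _, .inl rfl⟩, ⟨.cs, Sym2.mem_mk_left _ _, .inl rfl⟩]

lemma exists_mem_middleVerts_of_mem_pathEdges {e : Sym2 V3} (he : e ∈ pathEdges φ) :
    ∃ v ∈ e, v ∈ middleVerts := by
  obtain ⟨i, -, l, -, rfl | rfl⟩ := mem_pathEdges.1 he
  exacts [⟨.z i l, Sym2.mem_mk_right _ _, .inr ⟨i, l, rfl⟩⟩,
    ⟨.z i l, Sym2.mem_mk_left _ _, .inr ⟨i, l, rfl⟩⟩]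

lemma disjoint_E0_Estar : Disjoint (E0 φ) (Estar φ) :=
  Finset.disjoint_left.2 fun _ h0 h ↦
    let ⟨_, hv, hmid⟩ := exists_mem_middleVerts_of_mem_Estar h
    notMem_middleVerts_of_mem_E0 h0 hv hmid

lemma disjoint_E0_pathEdges : Disjoint (E0 φ) (pathEdges φ) :=
  Finset.disjoint_left.2 fun _ h0 h ↦
    let ⟨_, hv, hmid⟩ := exists_mem_middleVerts_of_mem_pathEdges h
    notMem_middleVerts_of_mem_E0 h0 hv hmid

lemma disjoint_Estar_pathEdges : Disjoint (Estar φ) (pathEdges φ) := by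
  refine Finset.disjoint_left.2 fun e h h' ↦ ?_
  obtain ⟨j, -, rfl | rfl⟩ := mem_Estar.1 h <;> simp [mem_pathEdges] at h'

lemma disjoint_middleVerts : Disjoint (VFT φ ∪ VC φ) middleVerts := by
  refine Set.disjoint_left.2 fun v hv hmid ↦ ?_
  grind [VFT, VC, middleVerts]

lemma mem_E0_of_mem_Eall {e : Sym2 V3} (he : e ∈ Eall φ) (hmid : ∀ v ∈ e, v ∉ middleVerts) :
    e ∈ E0 φ := by
  simp only [Eall_eq, Finset.mem_union] at he
  obtain (he | he) | he := he
  · exact he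
  · obtain ⟨v, hv, h⟩ := exists_mem_middleVerts_of_mem_Estar he
    exact absurd h (hmid v hv)
  · obtain ⟨v, hv, h⟩ := exists_mem_middleVerts_of_mem_pathEdges he
    exact absurd h (hmid v hv)

lemma exists_notMem_VC_of_mem_E0 {e : Sym2 V3} (he : e ∈ E0 φ) : ∃ v ∈ e, v ∉ VC φ := by
  obtain ⟨i, -, he⟩ | ⟨i, -, he⟩ | ⟨j, -, p, -, he⟩ := mem_E0.1 he
  · obtain ⟨b, l, h⟩ := exists_literalVertex_of_mem_Xedges he e.out_fst_mem
    exact ⟨_, e.out_fst_mem, by grind [VC, literalVertex]⟩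
  · obtain ⟨p, l, h⟩ := exists_literalVertex_of_mem_Yedges he e.out_fst_mem
    exact ⟨_, e.out_fst_mem, by grind [VC, literalVertex]⟩
  · obtain ⟨l, rfl | rfl | rfl⟩ | rfl | rfl := exists_eq_of_mem_occurrenceCycle he <;>
      exact ⟨_, Sym2.mem_mk_left _ _, by grind [VC, literalVertex]⟩

lemma exists_mem_pathEdges_of_mem_VFT {v : V3} (hv : v ∈ VFT φ) : ∃ e ∈ pathEdges φ, v ∈ e := by
  obtain ⟨i, hi, l, hl, hl', rfl | rfl⟩ := hv
  · exact ⟨s(.t i l, .z i l), mem_pathEdges.2 ⟨i, hi, l, ⟨hl, hl'⟩, .inl rfl⟩,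
      Sym2.mem_mk_left _ _⟩
  · exact ⟨s(.z i l, .f i l), mem_pathEdges.2 ⟨i, hi, l, ⟨hl, hl'⟩, .inr rfl⟩,
      Sym2.mem_mk_right _ _⟩

lemma exists_mem_VFT_of_mem_pathEdges {e : Sym2 V3} (he : e ∈ pathEdges φ) :
    ∃ v ∈ e, v ∈ VFT φ := by
  obtain ⟨i, hi, l, ⟨hl, hl'⟩, rfl | rfl⟩ := mem_pathEdges.1 he
  · exact ⟨_, Sym2.mem_mk_left _ _, i, hi, l, hl, hl', .inl rfl⟩
  · exact ⟨_, Sym2.mem_mk_right _ _, i, hi, l, hl, hl', .inr rfl⟩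

lemma exists_mem_VC_of_mem_Estar {e : Sym2 V3} (he : e ∈ Estar φ) : ∃ v ∈ e, v ∈ VC φ := by
  obtain ⟨j, hj, rfl | rfl⟩ := mem_Estar.1 he
  · exact ⟨_, Sym2.mem_mk_left _ _, j, hj, .inl rfl⟩
  · exact ⟨_, Sym2.mem_mk_right _ _, j, hj, .inr rfl⟩

lemma even_mDeg_Estar_iff {v : V3} : Even (mDeg (Estar φ).val v) ↔ v ∉ VC φ := by
  have hdisj : ((Finset.range φ.m : Finset ℕ) : Set ℕ).PairwiseDisjoint
      fun j ↦ ({s(.c1 j, .cs), s(.cs, .c2 j)} : Finset (Sym2 V3)) :=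
    fun j _ j' _ hne ↦ by simp [Function.onFun, hne.symm]
  rw [Estar, mDeg_biUnion hdisj]
  simp only [mDeg_two_path (show V3.c1 _ ≠ .c2 _ by simp)]
  cases v <;> simp [VC, apply_ite Even]

lemma even_mDeg_pathEdges_iff {v : V3} : Even (mDeg (pathEdges φ).val v) ↔ v ∉ VFT φ := by
  have hdisj_inner (i : ℕ) :
      ((Finset.Icc 1 (6 * μ φ i) : Finset ℕ) : Set ℕ).PairwiseDisjoint (Epl φ i) :=
    fun l _ l' _ hne ↦ by simp [Function.onFun, Epl, hne.symm]
  have hdisj : ((Finset.range φ.n : Finset ℕ) : Set ℕ).PairwiseDisjoint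
      fun i ↦ (Finset.Icc 1 (6 * μ φ i)).biUnion (Epl φ i) := by
    intro i _ i' _ hne
    simp only [Function.onFun, Finset.disjoint_biUnion_left, Finset.disjoint_biUnion_right]
    simp [Epl, hne.symm]
  rw [pathEdges, mDeg_biUnion hdisj]
  simp only [mDeg_biUnion (hdisj_inner _), Epl, mDeg_two_path (show V3.t _ _ ≠ .f _ _ by simp)]
  cases v <;> simp [VFT, ite_and, Finset.sum_ite_irrel, apply_ite Even, -Finset.sum_boole]

lemma disjoint_VFT_VC : Disjoint (VFT φ) (VC φ) :=
  Set.disjoint_left.2 fun v hv hv' ↦ by grind [VFT, VC]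

lemma imbalancedVerts_Eall (hμ : ∀ i < φ.n, 1 ≤ μ φ i) :
    imbalancedVerts (Eall φ).val = VFT φ ∪ VC φ := by
  have hdisj : Disjoint (E0 φ ∪ Estar φ) (pathEdges φ) :=
    Finset.disjoint_union_left.2 ⟨disjoint_E0_pathEdges, disjoint_Estar_pathEdges⟩
  ext v
  have hVC : v ∈ VFT φ → v ∉ VC φ := fun h ↦ Set.disjoint_left.1 disjoint_VFT_VC h
  simp only [imbalancedVerts, Set.mem_ofPred_eq, Set.mem_union, Eall_eq, mDeg_union hdisj,
    mDeg_union disjoint_E0_Estar, Nat.even_add, even_mDeg_E0 hμ v, even_mDeg_Estar_iff,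
    even_mDeg_pathEdges_iff]
  tauto

/-! ### Feasible tours -/

lemma FeasibleTour.mem_Eall_of_mem_walkEdges {T : List V3} (hT : FeasibleTour φ T) {e : Sym2 V3}
    (he : e ∈ walkEdges T) : e ∈ Eall φ := by
  obtain ⟨-, hchain, -⟩ := hT
  exact mem_of_mem_walkEdges (S := (Eall φ : Set (Sym2 V3))) hchain he

/-- Here `q` is the position of the first path edge: by the precedence constraints all of `E_0` is
traversed before it. -/
lemma FeasibleTour.exists_mem_take_mem_drop {T : List V3} (hT : FeasibleTour φ T) :
    ∃ q, (∀ e ∈ E0 φ, e ∈ (walkEdgeList T).take q) ∧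
      ∀ e ∈ pathEdges φ, e ∈ (walkEdgeList T).drop q := by
  obtain ⟨-, -, -, hcover, hprec⟩ := hT
  have mem_of_mem_Eall {e : Sym2 V3} (he : e ∈ Eall φ) : e ∈ walkEdgeList T := hcover e he
  generalize walkEdgeList T = L at hprec mem_of_mem_Eall
  refine ⟨L.findIdx (· ∈ pathEdges φ), fun e he ↦ ?_, fun e he ↦ ?_⟩
  · by_cases hq : L.findIdx (· ∈ pathEdges φ) < L.length
    · have hpath : L[L.findIdx (· ∈ pathEdges φ)] ∈ pathEdges φ := by
        simpa using List.findIdx_getElem (w := hq)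
      obtain ⟨i, hi, l, hl, hil⟩ := mem_pathEdges.1 hpath
      obtain ⟨p, hp, hpq, rfl⟩ := hprec _ hq (.pl i l) ⟨hi, hl⟩
        (by simpa [classEdges, Epl] using hil) .e0 trivial trivial e he
      exact List.mem_take_iff_getElem.2 ⟨p, by omega, rfl⟩
    · rw [List.take_of_length_le (by omega)]
      exact mem_of_mem_Eall (by simp [Eall_eq, he])
  · have heE : e ∈ Eall φ := by simp [Eall_eq, he]
    obtain ⟨k, hk, rfl⟩ := List.mem_iff_getElem.1 (mem_of_mem_Eall heE)
    have hqk : L.findIdx (· ∈ pathEdges φ) ≤ k := by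
      by_contra! hlt
      simpa [he] using List.not_of_lt_findIdx hlt
    exact List.mem_drop_iff_getElem.2 ⟨k - L.findIdx (· ∈ pathEdges φ), by omega,
      by congr 1; omega⟩

lemma FeasibleTour.reflTransGen_mAdj_of_mem_VFT {T : List V3} (hT : FeasibleTour φ T)
    {R : Multiset (Sym2 V3)} (hR : walkEdges T = (E0 φ).val + R) {x y : V3} (hx : x ∈ VFT φ)
    (hy : y ∈ VFT φ) : Relation.ReflTransGen (mAdj R) x y := by
  obtain ⟨q, htake, hdrop⟩ := hT.exists_mem_take_mem_drop
  have hsuffix : walkEdges (T.drop q) ≤ R := by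
    have hE0 : (E0 φ).val ≤ ↑((walkEdgeList T).take q) :=
      (Multiset.le_iff_subset (E0 φ).nodup).2 fun e he ↦ htake e he
    have hsplit : walkEdges T = ↑((walkEdgeList T).take q) + walkEdges (T.drop q) := by
      rw [walkEdges, walkEdges, walkEdgeList_drop, Multiset.coe_add, List.take_append_drop]
    rw [hR] at hsplit
    exact le_of_add_le_add_left (hsplit ▸ add_le_add_left hE0 _)
  have mem_mVerts {v : V3} (hv : v ∈ VFT φ) : v ∈ mVerts (walkEdges (T.drop q)) := by
    obtain ⟨e, he, hve⟩ := exists_mem_pathEdges_of_mem_VFT hv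
    exact ⟨e, by simpa [walkEdges, walkEdgeList_drop] using hdrop e he, hve⟩
  exact reflTransGen_mAdj_mono hsuffix
    (mConnected_walkEdges _ _ (mem_mVerts hx) _ (mem_mVerts hy))

lemma FeasibleTour.mConnected_sdiff_E0_add {T : List V3} (hT : FeasibleTour φ T)
    {M : Multiset (Sym2 V3)} (hM : M = walkEdges T - (Eall φ).val) (hVC : VC φ ⊆ mVerts M)
    (hVFT : ∀ e ∈ M, ∃ v ∈ e, v ∈ VFT φ) : mConnected ((Eall φ \ E0 φ).val + M) := by
  have hcover : ∀ e ∈ Eall φ, e ∈ walkEdges T := hT.2.2.2.1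
  have hE0 : ∀ e ∈ E0 φ, e ∈ (Eall φ).val := fun e he ↦ by simp [Eall_eq, he]
  have hR : walkEdges T = (E0 φ).val + ((Eall φ \ E0 φ).val + M) := by
    rw [eq_val_add_sub hcover, ← hM, eq_val_add_sub hE0, Finset.sdiff_val, add_assoc]
  generalize hRdef : (Eall φ \ E0 φ).val + M = R at hR ⊢
  have mem_R_iff {e : Sym2 V3} : e ∈ R ↔ e ∈ Eall φ \ E0 φ ∨ e ∈ M := by
    rw [← hRdef, Multiset.mem_add, Finset.mem_val]
  refine mConnected_of_forall_exists_reachable (U := VFT φ)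
    (fun x hx y hy ↦ hT.reflTransGen_mAdj_of_mem_VFT hR hx hy) ?_
  have reach_of_mem_M {e : Sym2 V3} (he : e ∈ M) {u : V3} (hu : u ∈ e) :
      ∃ x ∈ VFT φ, Relation.ReflTransGen (mAdj R) u x := by
    obtain ⟨x, hx, hxV⟩ := hVFT e he
    exact ⟨x, hxV, reflTransGen_mAdj_of_mem (mem_R_iff.2 (.inr he)) hu hx⟩
  rintro u ⟨e, he, hu⟩
  obtain heE | heM := mem_R_iff.1 he
  · simp only [Eall_eq, Finset.mem_sdiff, Finset.mem_union] at heE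
    obtain ⟨(h | h) | h, h0⟩ := heE
    · exact absurd h h0
    · obtain ⟨c, hc, hcV⟩ := exists_mem_VC_of_mem_Estar h
      obtain ⟨e', he', hce'⟩ := hVC hcV
      obtain ⟨x, hx, hcx⟩ := reach_of_mem_M he' hce'
      exact ⟨x, hx, (reflTransGen_mAdj_of_mem he hu hc).trans hcx⟩
    · obtain ⟨x, hx, hxV⟩ := exists_mem_VFT_of_mem_pathEdges h
      exact ⟨x, hxV, reflTransGen_mAdj_of_mem he hu hx⟩
  · exact reach_of_mem_M heM hu

lemma IsTightTour.isPerfectMatchingOn {T : List V3} (hT : IsTightTour φ T)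
    (hμ : ∀ i < φ.n, 1 ≤ μ φ i) :
    IsPerfectMatchingOn (walkEdges T - (Eall φ).val) (VFT φ ∪ VC φ) := by
  obtain ⟨⟨-, -, hclosed, hcover, -⟩, htight⟩ := hT
  rw [← imbalancedVerts_Eall hμ]
  refine isPerfectMatchingOn_walkEdges_sub hclosed hcover ?_
  have himb : imb φ = (imbalancedVerts (Eall φ).val).ncard := rfl
  rw [← himb]
  have hcard : (2 * Multiset.card (walkEdges T) : ℚ) ≤ 2 * (Eall φ).card + imb φ := by linarith
  exact_mod_cast hcard

end Construction

/-- Let `T` be a tight tour for the HCPP instance `I_φ` produced by the construction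
from a 3-CNF formula `φ` (in which every variable occurs in some clause), and let
`M = E(T) \ E` be the multiset of edges that `T` traverses additionally to `E`
(with the multiplicity of additional traversals). Then:
(i) `M ⊆ E_0` and `M` is a perfect matching on the vertex set `V_FT ∪ V_C`
(in particular `M` contains each edge at most once);
(ii) each edge in `M` has at least one endpoint in `V_FT`; and
(iii) the multigraph `⟨G⟩((E \ E_0) ∪ M)` is connected. -/
theorem tight_tour_extra_edges (φ : CNF3) (hμ : ∀ i < φ.n, 1 ≤ μ φ i)
    (T : List V3) (hT : IsTightTour φ T)
    (M : Multiset (Sym2 V3)) (hM : M = walkEdges T - (Eall φ).val) :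
    (∀ e ∈ M, e ∈ E0 φ) ∧
    IsPerfectMatchingOn M (VFT φ ∪ VC φ) ∧
    (∀ e ∈ M, ∃ v ∈ e, v ∈ VFT φ) ∧
    mConnected ((Eall φ \ E0 φ).val + M) := by
  have hmatch : IsPerfectMatchingOn M (VFT φ ∪ VC φ) := hM ▸ hT.isPerfectMatchingOn hμ
  have hverts : mVerts M = VFT φ ∪ VC φ := hmatch.2.2.2
  have hmem {e : Sym2 V3} (he : e ∈ M) {v : V3} (hv : v ∈ e) : v ∈ VFT φ ∪ VC φ :=
    hverts ▸ ⟨e, he, hv⟩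
  have hE0 : ∀ e ∈ M, e ∈ E0 φ := fun e he ↦
    have heT : e ∈ walkEdges T := Multiset.mem_of_le tsub_le_self (hM ▸ he)
    mem_E0_of_mem_Eall (hT.1.mem_Eall_of_mem_walkEdges heT)
      fun v hv ↦ Set.disjoint_left.1 disjoint_middleVerts (hmem he hv)
  have hVFT : ∀ e ∈ M, ∃ v ∈ e, v ∈ VFT φ := fun e he ↦
    have ⟨v, hv, hvC⟩ := exists_notMem_VC_of_mem_E0 (hE0 e he)
    ⟨v, hv, (hmem he hv).resolve_right hvC⟩
  have hVC : VC φ ⊆ mVerts M := hverts ▸ Set.subset_union_right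
  exact ⟨hE0, hmatch, hVFT, hT.1.mConnected_sdiff_E0_add hM hVC hVFT⟩

end HCPPFormal
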